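/- arXiv:1210.4127 — 2 statements merged into one kernel-verified Lean document; each statement's English description precedes it below -/
import Mathlib

section
/- Let K be a number field, γ ∈ K, and define t₁(x) = x + γ and tᵢ(x) = (tᵢ₋₁(x) - γ)² + x + γ for i ≥ 2. If for some n ≥ 1 and m ∈ K, the polynomial gⁿ_{γ,m}(x) is irreducible over K and g^{n+1}_{γ,m}(x) is reducible over K, then t_{n+1}(m) is a square in K. -/
open Polynomial

noncomputable def gIter {K : Type*} [Field K] (g : K[X]) : ℕ → K[X]
  | 0 => Polynomial.X
  | n + 1 => g.comp (gIter g n)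

/-- `tpoly γ i` is the polynomial `t_{i+1}` of the paper: `t₁(x) = x + γ`,
`tᵢ(x) = (tᵢ₋₁(x) - γ)² + x + γ`. -/
noncomputable def tpoly {K : Type*} [Field K] (γ : K) : ℕ → K[X]
  | 0 => Polynomial.X + Polynomial.C γ
  | i + 1 => (tpoly γ i - Polynomial.C γ) ^ 2 + Polynomial.X + Polynomial.C γ

theorem gIter_succ_eq_comp {K : Type*} [Field K] (g : K[X]) (n : ℕ) :
    gIter g (n + 1) = (gIter g n).comp g := by
  induction n with
  | zero => simp [gIter]
  | succ n ih => rw [gIter, ih, ← comp_assoc, ← gIter, ih]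

theorem natDegree_gIter {K : Type*} [Field K] (g : K[X]) (n : ℕ) :
    (gIter g n).natDegree = g.natDegree ^ n := by
  induction n with
  | zero => simp [gIter]
  | succ n ih => rw [gIter, natDegree_comp, ih, pow_succ']

theorem monic_gIter {K : Type*} [Field K] {g : K[X]} (hg : g.Monic) (hd : g.natDegree ≠ 0)
    (n : ℕ) : (gIter g n).Monic := by
  induction n with
  | zero => exact monic_X
  | succ n ih => exact hg.comp ih (by rw [natDegree_gIter]; exact pow_ne_zero _ hd)

/-- The value at `γ` of the `(n+1)`-st iterate of `(x - γ)² + m + γ` is `t_{n+1}(m)`. -/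
theorem eval_gIter_succ {K : Type*} [Field K] (γ m : K) (n : ℕ) :
    (gIter ((X - C γ) ^ 2 + C m + C γ) (n + 1)).eval γ = (tpoly γ n).eval m := by
  induction n with
  | zero => simp [gIter, tpoly]
  | succ n ih => rw [gIter, eval_comp, ih]; simp [tpoly]

theorem PowerBasis.norm_algebraMap_sub_gen {K L : Type*} [Field K] [Field L] [Algebra K L]
    (pb : PowerBasis K L) (c : K) :
    Algebra.norm K (algebraMap K L c - pb.gen) = (minpoly K pb.gen).eval c := by
  rw [← charpoly_leftMulMatrix pb, Matrix.eval_charpoly, Algebra.norm_eq_matrix_det pb.basis,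
    map_sub, AlgHom.commutes]
  rfl

theorem natDegree_X_sub_C_sq_add_C {K : Type*} [Field K] (a c : K) :
    ((X - C a) ^ 2 + C c).natDegree = 2 := by
  rw [natDegree_add_C, natDegree_pow, natDegree_X_sub_C]

theorem monic_X_sub_C_sq_add_C {K : Type*} [Field K] (a c : K) :
    ((X - C a) ^ 2 + C c).Monic :=
  ((monic_X_sub_C a).pow 2).add_of_left
    (degree_C_le.trans_lt (by rw [degree_pow, degree_X_sub_C]; decide))

/-- If `f` is monic irreducible of even degree and `f ((x - a)² + c)` is reducible, then `f c` is
a square. -/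
theorem isSquare_eval_of_not_irreducible_comp {K : Type*} [Field K] {f : K[X]} (hfm : f.Monic)
    (hf : Irreducible f) (hd : Even f.natDegree) (a c : K)
    (hred : ¬ Irreducible (f.comp ((X - C a) ^ 2 + C c))) : IsSquare (f.eval c) := by
  contrapose! hred
  refine irreducible_comp hfm (monic_X_sub_C_sq_add_C a c) hf fun E _ _ x hx => ?_
  have hint : IsIntegral K x := by
    by_contra h
    exact hf.ne_zero (hx ▸ minpoly.eq_zero h)
  let pb := IntermediateField.adjoin.powerBasis hint
  have hgen : pb.gen = IntermediateField.AdjoinSimple.gen K x := rfl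
  have hmin : minpoly K pb.gen = f := by rw [hgen, IntermediateField.minpoly_gen, hx]
  rw [← hgen]
  apply irreducible_of_degree_le_three_of_not_isRoot
  · rw [natDegree_sub_C, natDegree_map, natDegree_X_sub_C_sq_add_C]
    decide
  intro b hb
  have hb' : algebraMap K _ c - pb.gen = -1 * (b - algebraMap K _ a) ^ 2 := by
    simp only [IsRoot.def, eval_sub, eval_map_algebraMap, map_add, map_pow, map_sub, aeval_X,
      aeval_C, eval_C] at hb
    linear_combination hb
  have hone : Algebra.norm K (-1 : IntermediateField.adjoin K {x}) = 1 := by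
    have h := Algebra.norm_algebraMap_of_basis pb.basis (-1 : K)
    rw [map_neg, map_one, Fintype.card_fin, ← pb.natDegree_minpoly, hmin, hd.neg_one_pow] at h
    exact h
  apply hred
  rw [← hmin, ← PowerBasis.norm_algebraMap_sub_gen pb, hb', map_mul, hone, one_mul, map_pow]
  exact IsSquare.sq _

theorem stmt_7 (K : Type*) [Field K] [NumberField K] (γ m : K) (n : ℕ) (hn : 1 ≤ n)
    (g : K[X]) (hg : g = (X - C γ) ^ 2 + C m + C γ)
    (hirr : Irreducible (gIter g n))
    (hred : ¬ Irreducible (gIter g (n + 1))) :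
    ∃ y : K, (tpoly γ n).eval m = y ^ 2 := by
  have hg' : g = (X - C γ) ^ 2 + C (m + γ) := by rw [hg, C_add, add_assoc]
  have hdeg : g.natDegree = 2 := hg' ▸ natDegree_X_sub_C_sq_add_C γ (m + γ)
  have hgm : g.Monic := hg' ▸ monic_X_sub_C_sq_add_C γ (m + γ)
  have heven : Even (gIter g n).natDegree := by
    rw [natDegree_gIter, hdeg]
    exact even_two.pow_of_ne_zero (by omega)
  have hval : (gIter g n).eval (m + γ) = (tpoly γ n).eval m := by
    rw [← eval_gIter_succ, ← hg, gIter_succ_eq_comp, eval_comp, hg']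
    simp
  rw [gIter_succ_eq_comp] at hred
  nth_rw 2 [hg'] at hred
  rw [← hval]
  exact (isSquare_iff_exists_sq _).mp <| isSquare_eval_of_not_irreducible_comp
    (monic_gIter hgm (by omega) n) hirr heven γ (m + γ) hred
end

section
/- Let γ ∈ ℤ and tᵢ(x) ∈ ℚ[x] defined by t₁(x) = x + γ, tᵢ(x) = (tᵢ₋₁(x) - γ)² + x + γ. Then every root of tᵢ'(x) in an algebraic closure of ℚ₂ has negative 2-adic valuation; specifically, for i ≥ 2 and each r with 0 ≤ r ≤ i-2, tᵢ'(x) has exactly 2^r roots of 2-adic valuation -1/2^r. -/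
open Polynomial

open scoped Classical

section RationalValuation

variable {L : Type*} [Field L]

/-- `v` restricts on `Lˣ` to an additive valuation with values in `ℚ`; its value at `0` is
irrelevant. -/
structure IsRatValuation (v : L → ℚ) : Prop where
  map_mul : ∀ x y : L, x ≠ 0 → y ≠ 0 → v (x * y) = v x + v y
  map_add : ∀ x y : L, x ≠ 0 → y ≠ 0 → x + y ≠ 0 → min (v x) (v y) ≤ v (x + y)
  map_one : v 1 = 0

namespace IsRatValuation

variable {v : L → ℚ} (hv : IsRatValuation v)
include hv

theorem map_neg {x : L} (hx : x ≠ 0) : v (-x) = v x := by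
  have h1 : (-1 : L) ≠ 0 := neg_ne_zero.mpr one_ne_zero
  have h := hv.map_mul (-1) (-1) h1 h1
  rw [neg_mul_neg, one_mul, hv.map_one] at h
  rw [← neg_one_mul, hv.map_mul _ _ h1 hx]
  linarith

theorem map_pow {x : L} (hx : x ≠ 0) (n : ℕ) : v (x ^ n) = n * v x := by
  induction n with
  | zero => simp [hv.map_one]
  | succ n ih =>
    rw [pow_succ, hv.map_mul _ _ (pow_ne_zero n hx) hx, ih]
    push_cast
    ring

theorem map_inv {x : L} (hx : x ≠ 0) : v x⁻¹ = -v x := by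
  have h := hv.map_mul x x⁻¹ hx (inv_ne_zero hx)
  rw [mul_inv_cancel₀ hx, hv.map_one] at h
  linarith

theorem add_eq_of_lt {x y : L} (hx : x ≠ 0) (hy : y ≠ 0) (h : v x < v y) :
    x + y ≠ 0 ∧ v (x + y) = v x := by
  have hxy : x + y ≠ 0 := by
    intro h0
    rw [eq_neg_of_add_eq_zero_left h0, hv.map_neg hy] at h
    exact h.false
  refine ⟨hxy, le_antisymm ?_ ?_⟩
  · have h2 := hv.map_add (x + y) (-y) hxy (neg_ne_zero.mpr hy) (by simpa using hx)
    rw [add_neg_cancel_right, hv.map_neg hy] at h2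
    rcases min_le_iff.mp h2 with h3 | h3 <;> linarith
  · simpa [min_eq_left h.le] using hv.map_add x y hx hy hxy

theorem sub_eq_min {x y : L} (hx : x ≠ 0) (hy : y ≠ 0) (h : v x ≠ v y) :
    v (x - y) = min (v x) (v y) := by
  have hy' : -y ≠ 0 := neg_ne_zero.mpr hy
  rcases lt_or_gt_of_ne h with h | h
  · rw [sub_eq_add_neg, (hv.add_eq_of_lt hx hy' (by rwa [hv.map_neg hy])).2, min_eq_left h.le]
  · rw [sub_eq_add_neg, add_comm, (hv.add_eq_of_lt hy' hx (by rwa [hv.map_neg hy])).2,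
      hv.map_neg hy, min_eq_right h.le]

theorem multiset_prod {s : Multiset L} (h : (0 : L) ∉ s) : v s.prod = (s.map v).sum := by
  induction s using Multiset.induction_on with
  | empty => simp [hv.map_one]
  | cons a s ih =>
    rw [Multiset.mem_cons, not_or] at h
    rw [Multiset.prod_cons, Multiset.map_cons, Multiset.sum_cons,
      hv.map_mul _ _ (Ne.symm h.1) (Multiset.prod_ne_zero h.2), ih h.2]

/-- The valuation ring, described without reference to `v 0`, is closed under addition. -/
theorem integral_add {x y : L} (hx : x = 0 ∨ 0 ≤ v x) (hy : y = 0 ∨ 0 ≤ v y) :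
    x + y = 0 ∨ 0 ≤ v (x + y) := by
  by_cases hx0 : x = 0
  · simpa [hx0] using hy
  by_cases hy0 : y = 0
  · simpa [hy0] using hx
  by_cases hxy : x + y = 0
  · exact Or.inl hxy
  · exact Or.inr ((le_min (hx.resolve_left hx0) (hy.resolve_left hy0)).trans
      (hv.map_add x y hx0 hy0 hxy))

theorem integral_mul {x y : L} (hx : x = 0 ∨ 0 ≤ v x) (hy : y = 0 ∨ 0 ≤ v y) :
    x * y = 0 ∨ 0 ≤ v (x * y) := by
  by_cases hx0 : x = 0
  · simp [hx0]
  by_cases hy0 : y = 0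
  · simp [hy0]
  right
  rw [hv.map_mul x y hx0 hy0]
  exact add_nonneg (hx.resolve_left hx0) (hy.resolve_left hy0)

theorem exists_eq_neg [IsAlgClosed L] (hv2 : v 2 = 1) (h2 : (2 : L) ≠ 0) {a : ℚ} (ha : 0 < a) :
    ∃ x : L, x ≠ 0 ∧ v x = -a := by
  obtain ⟨y, hy⟩ := IsAlgClosed.exists_pow_nat_eq ((2 : L) ^ a.num.toNat) a.den_pos
  have hy0 : y ≠ 0 := by
    rintro rfl
    rw [zero_pow a.den_nz] at hy
    exact pow_ne_zero _ h2 hy.symm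
  refine ⟨y⁻¹, inv_ne_zero hy0, ?_⟩
  have h := congrArg v hy
  rw [hv.map_pow hy0, hv.map_pow h2, hv2, mul_one] at h
  have hnum : ((a.num.toNat : ℕ) : ℚ) = a.num := by
    exact_mod_cast Int.toNat_of_nonneg (Rat.num_nonneg.mpr ha.le)
  rw [hnum, ← Rat.den_mul_eq_num] at h
  rw [hv.map_inv hy0, mul_left_cancel₀ (Nat.cast_ne_zero.mpr a.den_nz) h]

/-- The value of a split polynomial at a point whose valuation is not that of a root. -/
theorem eval_eq_sum_min {p : L[X]} (hp : p.Splits) (hp0 : p ≠ 0) (h0 : ¬ p.IsRoot 0)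
    {x : L} (hx : x ≠ 0) (hroots : ∀ α ∈ p.roots, v x ≠ v α) :
    v (p.eval x) = v p.leadingCoeff + (p.roots.map fun α => min (v x) (v α)).sum := by
  have hne : (0 : L) ∉ p.roots.map fun α => x - α := by
    intro h
    obtain ⟨α, hα, h⟩ := Multiset.mem_map.mp h
    exact hroots α hα (by rw [sub_eq_zero.mp h])
  have hev : p.eval x = p.leadingCoeff * (p.roots.map fun α => x - α).prod := by
    conv_lhs => rw [hp.eq_prod_roots]
    simp [eval_multiset_prod, Multiset.map_map]
  rw [hev, hv.map_mul _ _ (leadingCoeff_ne_zero.mpr hp0) (Multiset.prod_ne_zero hne),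
    hv.multiset_prod hne, Multiset.map_map]
  congr 2
  refine Multiset.map_congr rfl fun α hα => hv.sub_eq_min hx ?_ (hroots α hα)
  rintro rfl
  exact h0 (isRoot_of_mem_roots hα)

end IsRatValuation

theorem sum_map_min_sub_sum_map_min {α : Type*} (f : α → ℚ) {b c : ℚ} (hcb : c ≤ b)
    (s : Multiset α) (h : ∀ x ∈ s, f x < c ∨ b < f x) :
    (s.map fun x => min c (f x)).sum - (s.map fun x => min b (f x)).sum =
      (c - b) * Multiset.card (s.filter fun x => b < f x) := by
  induction s using Multiset.induction_on with
  | empty => simp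
  | cons x s ih =>
    have ih := ih fun y hy => h y (Multiset.mem_cons_of_mem hy)
    simp only [Multiset.map_cons, Multiset.sum_cons]
    rcases h x (Multiset.mem_cons_self x s) with hx | hx
    · rw [Multiset.filter_cons_of_neg _ (by simp only [not_lt]; linarith), min_eq_right hx.le,
        min_eq_right (hx.le.trans hcb)]
      linarith
    · rw [Multiset.filter_cons_of_pos (p := fun x => b < f x) _ hx, min_eq_left hx.le, min_eq_left (hcb.trans hx.le),
        Multiset.card_cons]
      push_cast
      linarith

end RationalValuation

theorem tpoly_map {K L : Type*} [Field K] [Field L] (φ : K →+* L) (γ : K) (n : ℕ) :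
    (tpoly γ n).map φ = tpoly (φ γ) n := by
  induction n with
  | zero => simp [tpoly]
  | succ n ih => simp [tpoly, ih]

section TPoly

variable {L : Type*} [Field L] (c x : L)

theorem eval_tpoly_zero_sub : (tpoly c 0).eval x - c = x := by
  simp [tpoly]

theorem eval_tpoly_succ_sub (n : ℕ) :
    (tpoly c (n + 1)).eval x - c = ((tpoly c n).eval x - c) ^ 2 + x := by
  simp [tpoly]

theorem eval_derivative_tpoly_zero : (tpoly c 0).derivative.eval x = 1 := by
  simp [tpoly]

theorem eval_derivative_tpoly_succ (n : ℕ) :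
    (tpoly c (n + 1)).derivative.eval x =
      2 * (((tpoly c n).eval x - c) * (tpoly c n).derivative.eval x) + 1 := by
  simp [tpoly, derivative_pow]
  ring

variable {c x} {v : L → ℚ} (hv : IsRatValuation v) (hv2 : v 2 = 1) (h2 : (2 : L) ≠ 0)
include hv

theorem integral_eval_tpoly_sub (hx : x = 0 ∨ 0 ≤ v x) (n : ℕ) :
    (tpoly c n).eval x - c = 0 ∨ 0 ≤ v ((tpoly c n).eval x - c) := by
  induction n with
  | zero => rwa [eval_tpoly_zero_sub]
  | succ n ih =>
    rw [eval_tpoly_succ_sub, sq]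
    exact hv.integral_add (hv.integral_mul ih ih) hx

include hv2

theorem integral_eval_derivative_tpoly (hx : x = 0 ∨ 0 ≤ v x) (n : ℕ) :
    (tpoly c n).derivative.eval x = 0 ∨ 0 ≤ v ((tpoly c n).derivative.eval x) := by
  induction n with
  | zero => simp [eval_derivative_tpoly_zero, hv.map_one]
  | succ n ih =>
    rw [eval_derivative_tpoly_succ]
    refine hv.integral_add (hv.integral_mul (Or.inr (by rw [hv2]; norm_num)) ?_)
      (Or.inr hv.map_one.ge)
    exact hv.integral_mul (integral_eval_tpoly_sub hv hx n) ih

include h2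

theorem eval_derivative_tpoly_ne_zero (hx : x = 0 ∨ 0 ≤ v x) (n : ℕ) :
    (tpoly c n).derivative.eval x ≠ 0 := by
  cases n with
  | zero => simp [eval_derivative_tpoly_zero]
  | succ n =>
    rw [eval_derivative_tpoly_succ]
    have hy := hv.integral_mul (integral_eval_tpoly_sub (c := c) hv hx n)
      (integral_eval_derivative_tpoly (c := c) hv hv2 hx n)
    set y := ((tpoly c n).eval x - c) * (tpoly c n).derivative.eval x
    intro h
    have hy0 : y ≠ 0 := by
      intro h0
      simp [h0] at h
    have h' := congrArg v (eq_neg_of_add_eq_zero_left h)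
    rw [hv.map_mul _ _ h2 hy0, hv.map_neg one_ne_zero, hv.map_one, hv2] at h'
    linarith [hy.resolve_left hy0]

omit hv2 h2 in
theorem val_eval_tpoly_sub (hx : x ≠ 0) (hvx : v x < 0) (n : ℕ) :
    (tpoly c n).eval x - c ≠ 0 ∧ v ((tpoly c n).eval x - c) = 2 ^ n * v x := by
  induction n with
  | zero => simp [eval_tpoly_zero_sub, hx]
  | succ n ih =>
    have hsq : v (((tpoly c n).eval x - c) ^ 2) = 2 ^ (n + 1) * v x := by
      rw [hv.map_pow ih.1, ih.2]
      push_cast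
      ring
    have hpow : (1 : ℚ) < 2 ^ (n + 1) := one_lt_pow₀ (by norm_num) (by omega)
    rw [eval_tpoly_succ_sub, ← hsq]
    exact hv.add_eq_of_lt (pow_ne_zero 2 ih.1) hx (by rw [hsq]; nlinarith)

theorem val_eval_derivative_tpoly_of_le (hx : x ≠ 0) {r : ℕ} (hvx : v x < 0)
    (hr : -2 < 2 ^ r * v x) {n : ℕ} (hn : n ≤ r) :
    (tpoly c n).derivative.eval x ≠ 0 ∧ v ((tpoly c n).derivative.eval x) = 0 := by
  induction n with
  | zero => simp [eval_derivative_tpoly_zero, hv.map_one]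
  | succ n ih =>
    obtain ⟨hd, hvd⟩ := ih (by omega)
    obtain ⟨hs, hvs⟩ := val_eval_tpoly_sub (c := c) hv hx hvx n
    have hpow : (2 : ℚ) ^ (n + 1) ≤ 2 ^ r := pow_le_pow_right₀ (by norm_num) hn
    rw [pow_succ] at hpow
    have hsd := mul_ne_zero hs hd
    rw [eval_derivative_tpoly_succ, add_comm, ← hv.map_one]
    refine hv.add_eq_of_lt one_ne_zero (mul_ne_zero h2 hsd) ?_
    rw [hv.map_mul _ _ h2 hsd, hv.map_mul _ _ hs hd, hv.map_one, hv2, hvs, hvd]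
    nlinarith

theorem val_eval_derivative_tpoly (hx : x ≠ 0) {r : ℕ} (hr : -2 < 2 ^ r * v x)
    (hr' : 2 ^ r * v x < -1) (j : ℕ) :
    (tpoly c (r + j)).derivative.eval x ≠ 0 ∧
      v ((tpoly c (r + j)).derivative.eval x) = j + 2 ^ r * (2 ^ j - 1) * v x := by
  have hvx : v x < 0 := by
    have : (0 : ℚ) < 2 ^ r := by positivity
    by_contra! h
    nlinarith
  induction j with
  | zero => simpa using val_eval_derivative_tpoly_of_le (c := c) hv hv2 h2 hx hvx hr le_rfl
  | succ j ih =>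
    obtain ⟨hd, hvd⟩ := ih
    obtain ⟨hs, hvs⟩ := val_eval_tpoly_sub (c := c) hv hx hvx (r + j)
    have hsd := mul_ne_zero hs hd
    have hval : v (2 * (((tpoly c (r + j)).eval x - c) *
        (tpoly c (r + j)).derivative.eval x)) =
        (j + 1 : ℕ) + 2 ^ r * (2 ^ (j + 1) - 1) * v x := by
      rw [hv.map_mul _ _ h2 hsd, hv.map_mul _ _ hs hd, hv2, hvs, hvd]
      push_cast
      ring
    have hpow : (j + 1 : ℕ) + (1 : ℚ) ≤ 2 ^ (j + 1) := by
      exact_mod_cast Nat.lt_two_pow_self (n := j + 1)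
    have hj : (1 : ℚ) ≤ (j + 1 : ℕ) := by
      push_cast
      linarith [(Nat.cast_nonneg j : (0 : ℚ) ≤ j)]
    rw [← add_assoc, eval_derivative_tpoly_succ, ← hval]
    refine hv.add_eq_of_lt (mul_ne_zero h2 hsd) one_ne_zero ?_
    rw [hval, hv.map_one]
    nlinarith

theorem card_roots_derivative_tpoly_gt [IsAlgClosed L] {n r : ℕ} (hr : r ≤ n) :
    (Multiset.card ((tpoly c n).derivative.roots.filter fun α => -(5 / 4 / 2 ^ r) < v α) : ℚ) =
      2 ^ n - 2 ^ r := by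
  obtain ⟨j, rfl⟩ := Nat.exists_eq_add_of_le hr
  have h2r : (0 : ℚ) < 2 ^ r := by positivity
  have h0 : ¬ (tpoly c (r + j)).derivative.IsRoot 0 :=
    eval_derivative_tpoly_ne_zero hv hv2 h2 (Or.inl rfl) _
  have hp0 : (tpoly c (r + j)).derivative ≠ 0 := by
    intro h
    simp [h] at h0
  have hroot : ∀ α ∈ (tpoly c (r + j)).derivative.roots,
      v α < -(3 / 2 / 2 ^ r) ∨ -(5 / 4 / 2 ^ r) < v α := by
    intro α hα
    by_contra! h
    have hα0 : α ≠ 0 := by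
      rintro rfl
      exact h0 (isRoot_of_mem_roots hα)
    have hl : -(3 / 2) ≤ 2 ^ r * v α := by
      have h3 := mul_le_mul_of_nonneg_left h.1 h2r.le
      rwa [mul_neg, mul_div_cancel₀ _ h2r.ne'] at h3
    have hu : 2 ^ r * v α ≤ -(5 / 4) := by
      have h3 := mul_le_mul_of_nonneg_left h.2 h2r.le
      rwa [mul_neg, mul_div_cancel₀ _ h2r.ne'] at h3
    exact (val_eval_derivative_tpoly (c := c) hv hv2 h2 hα0 (by linarith) (by linarith) j).1
      (isRoot_of_mem_roots hα)
  obtain ⟨x, hx, hvx⟩ := hv.exists_eq_neg hv2 h2 (a := 5 / 4 / 2 ^ r) (by positivity)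
  obtain ⟨y, hy, hvy⟩ := hv.exists_eq_neg hv2 h2 (a := 3 / 2 / 2 ^ r) (by positivity)
  have hmx : 2 ^ r * v x = -(5 / 4) := by rw [hvx, mul_neg, mul_div_cancel₀ _ h2r.ne']
  have hmy : 2 ^ r * v y = -(3 / 2) := by rw [hvy, mul_neg, mul_div_cancel₀ _ h2r.ne']
  have hyx : v y < v x := lt_of_mul_lt_mul_left (by rw [hmx, hmy]; norm_num) h2r.le
  rw [← hvx, ← hvy] at hroot
  have hdx := (val_eval_derivative_tpoly (c := c) hv hv2 h2 hx
    (by rw [hmx]; norm_num) (by rw [hmx]; norm_num) j).2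
  have hdy := (val_eval_derivative_tpoly (c := c) hv hv2 h2 hy
    (by rw [hmy]; norm_num) (by rw [hmy]; norm_num) j).2
  rw [hv.eval_eq_sum_min (IsAlgClosed.splits _) hp0 h0 hx fun α hα h => by
    rcases hroot α hα with h' | h' <;> linarith] at hdx
  rw [hv.eval_eq_sum_min (IsAlgClosed.splits _) hp0 h0 hy fun α hα h => by
    rcases hroot α hα with h' | h' <;> linarith] at hdy
  have hsum := sum_map_min_sub_sum_map_min v hyx.le _ hroot
  rw [← hvx]
  refine mul_left_cancel₀ (sub_ne_zero.mpr hyx.ne) ?_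
  rw [← hsum, pow_add]
  linear_combination hdy - hdx

theorem card_roots_derivative_tpoly_eq [IsAlgClosed L] {n r : ℕ} (hr : r < n) :
    Multiset.card ((tpoly c n).derivative.roots.filter fun α => v α = -(1 / 2 ^ r)) = 2 ^ r := by
  have h2r : (0 : ℚ) < 2 ^ r := by positivity
  have hlocate : ∀ α ∈ (tpoly c n).derivative.roots,
      (-(5 / 4 / 2 ^ r) < v α ↔ v α = -(1 / 2 ^ r) ∨ -(5 / 4 / 2 ^ (r + 1)) < v α) := by
    intro α hα
    have hroot := isRoot_of_mem_roots hα
    have hα0 : α ≠ 0 := by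
      rintro rfl
      exact eval_derivative_tpoly_ne_zero hv hv2 h2 (Or.inl rfl) _ hroot
    have hnot : ∀ m ≤ n, -2 < 2 ^ m * v α → ¬ 2 ^ m * v α < -1 := by
      intro m hm hl hu
      obtain ⟨j, rfl⟩ := Nat.exists_eq_add_of_le hm
      exact (val_eval_derivative_tpoly (c := c) hv hv2 h2 hα0 hl hu j).1 hroot
    have h1 := hnot r hr.le
    have h3 := hnot (r + 1) hr
    have e1 : -(5 / 4 / 2 ^ r) < v α ↔ -(5 / 4) < 2 ^ r * v α := by
      rw [← neg_div, div_lt_iff₀' h2r]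
    have e2 : v α = -(1 / 2 ^ r) ↔ 2 ^ r * v α = -1 := by
      rw [← neg_div, eq_div_iff h2r.ne', mul_comm]
    have e3 : -(5 / 4 / 2 ^ (r + 1)) < v α ↔ -(5 / 8) < 2 ^ r * v α := by
      rw [← neg_div, div_lt_iff₀' (by positivity), pow_succ]
      constructor <;> intro h <;> linarith
    rw [pow_succ] at h3
    rw [e1, e2, e3]
    constructor
    · intro h
      by_contra! h'
      have h4 := h1 (by linarith)
      exact h3 (by rcases lt_or_gt_of_ne h'.1 with h5 | h5 <;> linarith)
        (by linarith)
    · rintro (h | h) <;> linarith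
  have hempty : ∀ α ∈ (tpoly c n).derivative.roots,
      ¬ (v α = -(1 / 2 ^ r) ∧ -(5 / 4 / 2 ^ (r + 1)) < v α) := by
    rintro α - ⟨h, h'⟩
    rw [h, neg_lt_neg_iff, div_lt_div_iff₀ h2r (by positivity), pow_succ] at h'
    linarith
  have hcard := congrArg Multiset.card (Multiset.filter_add_filter (fun α => v α = -(1 / 2 ^ r))
    (fun α => -(5 / 4 / 2 ^ (r + 1)) < v α) (tpoly c n).derivative.roots)
  rw [Multiset.filter_eq_nil.mpr hempty, add_zero, ← Multiset.filter_congr hlocate,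
    Multiset.card_add] at hcard
  have hcard' := congrArg (Nat.cast : ℕ → ℚ) hcard
  push_cast at hcard'
  rw [card_roots_derivative_tpoly_gt hv hv2 h2 hr.le,
    card_roots_derivative_tpoly_gt hv hv2 h2 hr, pow_succ] at hcard'
  have : (Multiset.card ((tpoly c n).derivative.roots.filter
      fun α => v α = -(1 / 2 ^ r)) : ℚ) = 2 ^ r := by linarith
  exact_mod_cast this

end TPoly

/-- Statement 13, phrased for an algebraic closure `L` of `ℚ₂` equipped with the unique
extension `v` of the 2-adic valuation (written additively, normalized by `v 2 = 1`). -/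
theorem stmt_13 (γ : ℤ)
    (L : Type*) [Field L] [IsAlgClosed L] [Algebra ℚ_[2] L] [Algebra.IsAlgebraic ℚ_[2] L]
    (v : L → ℚ)
    (hvmul : ∀ x y : L, x ≠ 0 → y ≠ 0 → v (x * y) = v x + v y)
    (hvadd : ∀ x y : L, x ≠ 0 → y ≠ 0 → x + y ≠ 0 → min (v x) (v y) ≤ v (x + y))
    (hv2 : v (2 : L) = 1) (hvone : v (1 : L) = 0)
    (i : ℕ) (hi : 1 ≤ i) :
    (∀ α : L,
        ((tpoly (γ : ℚ) (i - 1)).derivative.map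
          ((algebraMap ℚ_[2] L).comp (algebraMap ℚ ℚ_[2]))).IsRoot α → v α < 0) ∧
    (2 ≤ i → ∀ r : ℕ, r ≤ i - 2 →
      Multiset.card
        ((((tpoly (γ : ℚ) (i - 1)).derivative.map
            ((algebraMap ℚ_[2] L).comp (algebraMap ℚ ℚ_[2]))).roots).filter
          (fun α => v α = -(1 / 2 ^ r : ℚ))) = 2 ^ r) := by
  have hv : IsRatValuation v := ⟨hvmul, hvadd, hvone⟩
  have : CharZero L := charZero_of_injective_algebraMap (algebraMap ℚ_[2] L).injective
  have h2 : (2 : L) ≠ 0 := two_ne_zero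
  rw [← derivative_map, tpoly_map]
  refine ⟨fun α hα => ?_, fun hi2 r hr => card_roots_derivative_tpoly_eq hv hv2 h2 (by omega)⟩
  by_contra! h
  exact eval_derivative_tpoly_ne_zero hv hv2 h2 (Or.inr h) _ hα
end
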